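/- Let F be a totally real number field of degree n embedded in ℝ^n via a fixed ordering of its real embeddings, 𝔣 a nonzero ideal of O_F, and V a finite-index subgroup of E₊(𝔣) (necessarily free of rank n−1). Let D and D′ be two Colmez domains for V, i.e. Shintani sets each of which is a fundamental domain for the action of V on ℝ_{>0}^n by componentwise multiplication. Then there exist an integer d ≥ 1, Shintani cones C₁,…,C_d, and units ε₁,…,ε_d ∈ V such that D is the disjoint union of C₁,…,C_d and D′ is the disjoint union of ε₁C₁,…,ε_dC_d. -/

import Mathlib

/-!
Two Colmez domains `D`, `D'` have a common refinement up to units: cut `D` into the pieces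
`P e = D ∩ e⁻¹ D'` for `e ∈ V`. Since the translates of `D'` tile the positive orthant, the `P e`
partition `D`, and since the translates of `D` tile it as well, the `e P e` partition `D'`. It
remains to see that every `P e` is a finite disjoint union of Shintani cones and that only finitely
many of them are nonempty.

* Shintani sets are stable under intersection (`IsShintaniSet.inter`). A Shintani cone is cut out by
  sign conditions on linear functionals that are rational on `F` (`IsShintaniCone.exists_signs`),
  because a `ℚ`-basis of `F` is an `ℝ`-basis of `ℝ^n`. So it suffices to cut a simplicial cone by
  one rational hyperplane (`isShintaniSet_posSpan_inter`), which is done by repeatedly subdividing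
  the cone at points where an edge crosses the hyperplane. The new generators are positive rational
  combinations of old ones, hence totally positive elements of `F`.
* If `y ∈ D` and `e y ∈ D'`, then the ratios of the conjugates of `e` are bounded, since
  the ratios of coordinates are bounded on Shintani sets (`IsShintaniSet.exists_ratio_le`). As the
  product of the conjugates is `1`, the conjugates are themselves bounded, and only finitely many
  algebraic integers of `F` have this property (`finite_units`).
-/

noncomputable section

/-- The image in `F` of a unit of the ring of integers of `F`. -/
def uval (F : Type) [Field F] [NumberField F]
    (u : (NumberField.RingOfIntegers F)ˣ) : F :=
  algebraMap (NumberField.RingOfIntegers F) F (u : NumberField.RingOfIntegers F)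

/-- The embedding of `F` into `ℝ^n` given by the ordered real embeddings `σ`. -/
def emb (n : ℕ) (F : Type) [Field F] (σ : Fin n → (F →+* ℝ)) (x : F) :
    Fin n → ℝ := fun i => σ i x

/-- The group `E₊(𝔣)` of totally positive units of `O_F` congruent to `1` modulo the
ideal `𝔣`. -/
def totPosUnitsMod (n : ℕ) (F : Type) [Field F] [NumberField F]
    (σ : Fin n → (F →+* ℝ)) (𝔣 : Ideal (NumberField.RingOfIntegers F)) :
    Subgroup (NumberField.RingOfIntegers F)ˣ where
  carrier := {u | (∀ i, 0 < σ i (uval F u)) ∧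
    ((u : NumberField.RingOfIntegers F) - 1 ∈ 𝔣)}
  one_mem' := ⟨by intro i; simp [uval], by simp⟩
  mul_mem' := by
    rintro a b ⟨ha, ha'⟩ ⟨hb, hb'⟩
    refine ⟨fun i => ?_, ?_⟩
    · have h : uval F (a * b) = uval F a * uval F b := by
        simp [uval, Units.val_mul, map_mul]
      rw [h, map_mul]
      exact mul_pos (ha i) (hb i)
    · have key : ((a * b : (NumberField.RingOfIntegers F)ˣ) :
          NumberField.RingOfIntegers F) - 1
          = (a : NumberField.RingOfIntegers F) *
              ((b : NumberField.RingOfIntegers F) - 1) +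
            ((a : NumberField.RingOfIntegers F) - 1) := by
        rw [Units.val_mul]; ring
      rw [key]
      exact Ideal.add_mem _ (Ideal.mul_mem_left _ _ hb') ha'
  inv_mem' := by
    rintro a ⟨ha, ha'⟩
    refine ⟨fun i => ?_, ?_⟩
    · have h : uval F a * uval F a⁻¹ = 1 := by
        simp [uval, ← map_mul, ← Units.val_mul]
      have h2 : σ i (uval F a) * σ i (uval F a⁻¹) = 1 := by
        rw [← map_mul, h, map_one]
      nlinarith [ha i, h2]
    · have h1 : ((a⁻¹ : (NumberField.RingOfIntegers F)ˣ) :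
          NumberField.RingOfIntegers F) * (a : NumberField.RingOfIntegers F) = 1 :=
        Units.inv_mul a
      have key : ((a⁻¹ : (NumberField.RingOfIntegers F)ˣ) :
          NumberField.RingOfIntegers F) - 1
          = ((a⁻¹ : (NumberField.RingOfIntegers F)ˣ) :
              NumberField.RingOfIntegers F) *
            (1 - (a : NumberField.RingOfIntegers F)) := by
        rw [mul_sub, mul_one, h1]
      rw [key]
      refine Ideal.mul_mem_left _ _ ?_
      simpa using 𝔣.neg_mem ha'

/-- `δ(x₁,…,x_n)`: the sign of the determinant of the matrix with columns `x₁,…,x_n`. -/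
def signdet (n : ℕ) (xs : Fin n → Fin n → ℝ) : ℝ :=
  Real.sign (Matrix.of fun j i : Fin n => xs i j).det

/-- The homogeneous chain `[x₁ | ⋯ | x_{n−1}] = (1, x₁, x₁x₂, …, x₁⋯x_{n−1})`,
products taken componentwise. -/
def chain (n : ℕ) (x : Fin (n - 1) → Fin n → ℝ) : Fin n → Fin n → ℝ :=
  fun k j => ∏ t : Fin (n - 1), if (t : ℕ) < (k : ℕ) then x t j else 1

/-- The open simplicial cone `C(v₁,…,v_m) = {c₁v₁ + ⋯ + c_mv_m : cᵢ > 0}`. -/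
def openCone (n m : ℕ) (v : Fin m → Fin n → ℝ) : Set (Fin n → ℝ) :=
  {y | ∃ c : Fin m → ℝ, (∀ t, 0 < c t) ∧ y = ∑ t, c t • v t}

/-- `C̄_α(v₁,…,v_n)`: the set of `x` such that `x + hα ∈ C(v₁,…,v_n)` for all
sufficiently small `h > 0`. -/
def cbar (n : ℕ) (α : Fin n → ℝ) (v : Fin n → Fin n → ℝ) : Set (Fin n → ℝ) :=
  {x | ∃ h₀ : ℝ, 0 < h₀ ∧ ∀ h : ℝ, 0 < h → h < h₀ → x + h • α ∈ openCone n n v}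

/-- The set `xD`, the image of `D ⊆ ℝ^n` under componentwise multiplication by the
image of `x ∈ F` in `ℝ^n`. -/
def scaleSet (n : ℕ) (F : Type) [Field F] (σ : Fin n → (F →+* ℝ)) (x : F)
    (D : Set (Fin n → ℝ)) : Set (Fin n → ℝ) :=
  (fun y => fun i => σ i x * y i) '' D


/-- A Shintani cone: an open simplicial cone generated by finitely many (at least one)
linearly independent vectors, each of which is the image in `ℝ^n` of a totally positive
element of `F`. -/
def IsShintaniCone (n : ℕ) (F : Type) [Field F] (σ : Fin n → (F →+* ℝ))
    (C : Set (Fin n → ℝ)) : Prop :=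
  ∃ (r : ℕ) (v : Fin r → Fin n → ℝ),
    1 ≤ r ∧ LinearIndependent ℝ v ∧
    (∀ t, ∃ x : F, (∀ i, 0 < σ i x) ∧ v t = emb n F σ x) ∧
    C = openCone n r v

/-- A Shintani set: a finite disjoint union of Shintani cones. -/
def IsShintaniSet (n : ℕ) (F : Type) [Field F] (σ : Fin n → (F →+* ℝ))
    (D : Set (Fin n → ℝ)) : Prop :=
  ∃ (d : ℕ) (C : Fin d → Set (Fin n → ℝ)),
    (∀ k, IsShintaniCone n F σ (C k)) ∧
    (∀ k k', k ≠ k' → Disjoint (C k) (C k')) ∧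
    D = ⋃ k, C k

/-- `D` is a fundamental domain for the action of the subgroup `V ≤ E₊(𝔣)` on
`ℝ_{>0}^n` by componentwise multiplication: the sets `εD`, `ε ∈ V`, are pairwise
disjoint with union `ℝ_{>0}^n`. -/
def IsColmezFD (n : ℕ) (F : Type) [Field F] [NumberField F]
    (σ : Fin n → (F →+* ℝ)) (𝔣 : Ideal (NumberField.RingOfIntegers F))
    (V : Subgroup (totPosUnitsMod n F σ 𝔣)) (D : Set (Fin n → ℝ)) : Prop :=
  (⋃ e : V, scaleSet n F σ (uval F ↑↑e) D) = {x : Fin n → ℝ | ∀ i, 0 < x i} ∧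
  ∀ e e' : V, e ≠ e' →
    Disjoint (scaleSet n F σ (uval F ↑↑e) D) (scaleSet n F σ (uval F ↑↑e') D)

/-! ### Open cones and their subdivision -/

/-- The open cone of strictly positive combinations of a finite family `v`. For `ι = Fin m` and
`E = Fin n → ℝ` it is `openCone n m v`; an arbitrary index type lets a generator be dropped
without renumbering the others. -/
def posSpan {E ι : Type*} [AddCommGroup E] [Module ℝ E] [Fintype ι] (v : ι → E) : Set E :=
  {y | ∃ c : ι → ℝ, (∀ t, 0 < c t) ∧ y = ∑ t, c t • v t}

theorem posSpan_comp_equiv {E ι κ : Type*} [AddCommGroup E] [Module ℝ E] [Fintype ι] [Fintype κ]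
    (f : κ ≃ ι) (v : ι → E) : posSpan (v ∘ f) = posSpan v := by
  ext y
  constructor
  · rintro ⟨c, hc, rfl⟩
    refine ⟨c ∘ f.symm, fun t => hc _, ?_⟩
    rw [← f.sum_comp]
    simp
  · rintro ⟨c, hc, rfl⟩
    refine ⟨c ∘ f, fun t => hc _, ?_⟩
    rw [← f.sum_comp]
    simp

/-- Replacing `v i` by `w = a v_j + b v_i` changes the coordinates of a point by a substitution
that only touches the positions `i` and `j`. -/
theorem sum_smul_update {E ι : Type*} [AddCommGroup E] [Module ℝ E] [Fintype ι] [DecidableEq ι]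
    (v : ι → E) {i j : ι} (hij : i ≠ j) (a b : ℝ) (c : ι → ℝ) :
    ∑ t, c t • Function.update v i (a • v j + b • v i) t =
      ∑ t, Function.update (Function.update c j (c j + c i * a)) i (c i * b) t • v t := by
  have h : ∀ g : ι → E, ∑ t, g t = g i + (g j + ∑ t ∈ (Finset.univ.erase i).erase j, g t) := by
    intro g
    rw [Finset.add_sum_erase _ g (by simp [hij.symm]), Finset.add_sum_erase _ g (by simp)]
  rw [h, h (fun t => _)]
  have hr : ∑ t ∈ (Finset.univ.erase i).erase j,
        c t • Function.update v i (a • v j + b • v i) t =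
      ∑ t ∈ (Finset.univ.erase i).erase j,
        Function.update (Function.update c j (c j + c i * a)) i (c i * b) t • v t := by
    refine Finset.sum_congr rfl fun t ht => ?_
    simp only [Finset.mem_erase, Finset.mem_univ, and_true] at ht
    simp [Function.update_of_ne ht.1, Function.update_of_ne ht.2]
  rw [hr]
  simp only [Function.update_self, Function.update_of_ne hij.symm]
  module

theorem linearIndependent_update {E ι : Type*} [AddCommGroup E] [Module ℝ E] [Fintype ι]
    [DecidableEq ι] {v : ι → E} (hv : LinearIndependent ℝ v) {i j : ι} (hij : i ≠ j) (a : ℝ)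
    {b : ℝ} (hb : b ≠ 0) :
    LinearIndependent ℝ (Function.update v i (a • v j + b • v i)) := by
  rw [Fintype.linearIndependent_iff] at hv ⊢
  intro c hc
  rw [sum_smul_update v hij] at hc
  have h := hv _ hc
  have hi : c i = 0 := by simpa [hb] using h i
  intro t
  by_cases hti : t = i
  · rw [hti, hi]
  by_cases htj : t = j
  · subst htj
    simpa [Function.update_of_ne hti, hi] using h t
  · simpa [Function.update_of_ne hti, Function.update_of_ne htj] using h t

/-- Let `w = a v_j + b v_i`, a ray inside the two-dimensional face spanned by `v i` and `v j`.
Replacing `v i` by `w` keeps those points of the cone that lie strictly on the `v j` side of the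
hyperplane through `w` and the remaining generators. -/
theorem posSpan_update {E ι : Type*} [AddCommGroup E] [Module ℝ E] [Fintype ι] [DecidableEq ι]
    (v : ι → E) {i j : ι} (hij : i ≠ j) {a b : ℝ} (ha : 0 < a) (hb : 0 < b) :
    posSpan (Function.update v i (a • v j + b • v i)) =
      {y | ∃ c : ι → ℝ, (∀ t, 0 < c t) ∧ a * c i < b * c j ∧ y = ∑ t, c t • v t} := by
  ext y
  constructor
  · rintro ⟨c, hc, rfl⟩
    refine ⟨_, ?_, ?_, sum_smul_update v hij a b c⟩
    · intro t
      have := hc i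
      have := hc t
      have := hc j
      simp only [Function.update_apply]
      split_ifs <;> positivity
    · simp only [Function.update_self, Function.update_of_ne hij.symm]
      nlinarith [mul_pos hb (hc j)]
  · rintro ⟨c, hc, hlt, rfl⟩
    refine ⟨Function.update (Function.update c j (c j - c i / b * a)) i (c i / b), ?_, ?_⟩
    · intro t
      have := hc i
      have := hc t
      have : 0 < c j - c i / b * a := by
        rw [sub_pos, div_mul_eq_mul_div, div_lt_iff₀ hb]
        linarith
      simp only [Function.update_apply]
      split_ifs <;> positivity
    · rw [sum_smul_update v hij]
      refine Finset.sum_congr rfl fun t _ => ?_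
      congr 1
      simp only [Function.update_apply, if_neg hij.symm]
      split_ifs with h1 h2
      · subst h1; field_simp
      · subst h2; simp
      · rfl

/-- Dropping `v j` after `v i` has been replaced by `w = a v_j + b v_i` gives the wall between the
two full-dimensional pieces described by `posSpan_update`. -/
theorem posSpan_update_restrict {E ι : Type*} [AddCommGroup E] [Module ℝ E] [Fintype ι]
    [DecidableEq ι] (v : ι → E) {i j : ι} (hij : i ≠ j) {a b : ℝ} (ha : 0 < a) (hb : 0 < b) :
    posSpan (fun t : {t // t ≠ j} => Function.update v i (a • v j + b • v i) t) =
      {y | ∃ c : ι → ℝ, (∀ t, 0 < c t) ∧ a * c i = b * c j ∧ y = ∑ t, c t • v t} := by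
  have key : ∀ c : ι → ℝ, c j = 0 →
      ∑ t : {t // t ≠ j}, c t • Function.update v i (a • v j + b • v i) t =
        ∑ t, Function.update (Function.update c j (c j + c i * a)) i (c i * b) t • v t := by
    intro c hc
    rw [← sum_smul_update v hij, ← Finset.sum_erase (a := j) _ (by simp [hc])]
    exact (Finset.sum_subtype (Finset.univ.erase j) (by simp)
      (fun t => c t • Function.update v i (a • v j + b • v i) t)).symm
  ext y
  constructor
  · rintro ⟨c, hc, rfl⟩
    have hk := key (fun t => if h : t ≠ j then c ⟨t, h⟩ else 0) (by simp)
    refine ⟨_, ?_, ?_, Eq.trans (Finset.sum_congr rfl fun t _ => ?_) hk⟩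
    · intro t
      have := hc ⟨i, hij⟩
      simp only [Function.update_apply]
      by_cases hti : t = i
      · simp only [hti, if_true, dif_pos hij]
        positivity
      by_cases htj : t = j
      · simp only [htj, hij.symm, if_true, if_false, dif_pos hij, ne_eq, not_true, dite_false,
          zero_add]
        positivity
      · simpa [hti, htj] using hc ⟨t, htj⟩
    · simp [Function.update_of_ne hij.symm, hij]
      ring
    · simp [t.2]
  · rintro ⟨c, hc, heq, rfl⟩
    refine ⟨fun t => Function.update (Function.update c j 0) i (c i / b) t, ?_, ?_⟩
    · rintro ⟨t, ht⟩
      have := hc i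
      have := hc t
      simp only [Function.update_apply, if_neg ht]
      split_ifs <;> positivity
    · rw [key _ (by simp [Function.update_of_ne hij.symm])]
      refine Finset.sum_congr rfl fun t _ => ?_
      congr 1
      simp only [Function.update_apply, if_neg hij.symm]
      split_ifs with h1 h2
      · subst h1; field_simp
      · subst h2; simp; field_simp; linarith
      · rfl

/-! ### Shintani sets -/

/-- A cone on totally positive elements of `F` is a Shintani cone, whatever the index type. -/
theorem isShintaniCone_posSpan {n : ℕ} {F : Type} [Field F] {σ : Fin n → (F →+* ℝ)}
    {ι : Type*} [Fintype ι] [Nonempty ι] (x : ι → F) (hx : ∀ t i, 0 < σ i (x t))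
    (hli : LinearIndependent ℝ fun t => emb n F σ (x t)) :
    IsShintaniCone n F σ (posSpan fun t => emb n F σ (x t)) := by
  let f := (Fintype.equivFin ι).symm
  refine ⟨Fintype.card ι, (fun t => emb n F σ (x t)) ∘ f, Fintype.card_pos,
    hli.comp f f.injective, fun t => ⟨x (f t), hx _, rfl⟩, ?_⟩
  exact (posSpan_comp_equiv f _).symm

theorem IsShintaniCone.exists_posSpan {n : ℕ} {F : Type} [Field F] {σ : Fin n → (F →+* ℝ)}
    {C : Set (Fin n → ℝ)} (hC : IsShintaniCone n F σ C) :
    ∃ (r : ℕ) (x : Fin r → F), 1 ≤ r ∧ (∀ t i, 0 < σ i (x t)) ∧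
      LinearIndependent ℝ (fun t => emb n F σ (x t)) ∧
      C = posSpan fun t => emb n F σ (x t) := by
  obtain ⟨r, v, hr, hli, hv, rfl⟩ := hC
  choose x hx hvx using hv
  obtain rfl : v = fun t => emb n F σ (x t) := funext hvx
  exact ⟨r, x, hr, hx, hli, rfl⟩

theorem isShintaniSet_of_finite {n : ℕ} {F : Type} [Field F] {σ : Fin n → (F →+* ℝ)}
    {ι : Type*} [Finite ι] {C : ι → Set (Fin n → ℝ)} (hC : ∀ k, IsShintaniCone n F σ (C k))
    (hd : ∀ k k', k ≠ k' → Disjoint (C k) (C k')) :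
    IsShintaniSet n F σ (⋃ k, C k) := by
  obtain ⟨m, ⟨f⟩⟩ := Finite.exists_equiv_fin ι
  refine ⟨m, C ∘ f.symm, fun k => hC _, fun k k' h => hd _ _ (f.symm.injective.ne h), ?_⟩
  exact (f.symm.surjective.iUnion_comp C).symm

theorem isShintaniSet_iUnion {n : ℕ} {F : Type} [Field F] {σ : Fin n → (F →+* ℝ)}
    {ι : Type*} [Finite ι] {S : ι → Set (Fin n → ℝ)} (hS : ∀ k, IsShintaniSet n F σ (S k))
    (hd : ∀ k k', k ≠ k' → Disjoint (S k) (S k')) :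
    IsShintaniSet n F σ (⋃ k, S k) := by
  choose d C hC hdis hU using hS
  have h : ⋃ k, S k = ⋃ p : Σ k, Fin (d k), C p.1 p.2 := by
    rw [Set.iUnion_sigma]
    exact Set.iUnion_congr hU
  rw [h]
  refine isShintaniSet_of_finite (fun p => hC _ _) ?_
  rintro ⟨k, a⟩ ⟨k', a'⟩ hne
  by_cases hk : k = k'
  · subst hk
    exact hdis k a a' fun h => hne (by rw [h])
  · refine (hd k k' hk).mono ?_ ?_ <;> rw [hU] <;> exact Set.subset_iUnion_of_subset _ subset_rfl

theorem isShintaniSet_empty {n : ℕ} {F : Type} [Field F] {σ : Fin n → (F →+* ℝ)} :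
    IsShintaniSet n F σ ∅ :=
  ⟨0, fun _ => ∅, fun k => k.elim0, fun k => k.elim0, by simp⟩

theorem IsShintaniCone.isShintaniSet {n : ℕ} {F : Type} [Field F] {σ : Fin n → (F →+* ℝ)}
    {C : Set (Fin n → ℝ)} (hC : IsShintaniCone n F σ C) : IsShintaniSet n F σ C :=
  ⟨1, fun _ => C, fun _ => hC, fun k k' h => (h (Subsingleton.elim k k')).elim,
    (Set.iUnion_const C).symm⟩

theorem isShintaniSet_union {n : ℕ} {F : Type} [Field F] {σ : Fin n → (F →+* ℝ)}
    {S T : Set (Fin n → ℝ)} (hS : IsShintaniSet n F σ S) (hT : IsShintaniSet n F σ T)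
    (h : Disjoint S T) : IsShintaniSet n F σ (S ∪ T) := by
  rw [Set.union_eq_iUnion]
  refine isShintaniSet_iUnion (fun b => by cases b <;> assumption) ?_
  intro b b' hb
  cases b <;> cases b' <;> first | exact (hb rfl).elim | exact h | exact h.symm

/-- The embedding `emb` as a `ℚ`-linear map. -/
def embₗ (n : ℕ) (F : Type) [Field F] [NumberField F] (σ : Fin n → (F →+* ℝ)) :
    F →ₗ[ℚ] (Fin n → ℝ) where
  toFun := emb n F σ
  map_add' x y := by ext i; simp [emb]
  map_smul' q x := by ext i; simp [emb, Rat.smul_def]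

theorem emb_comb {n : ℕ} {F : Type} [Field F] [NumberField F] (σ : Fin n → (F →+* ℝ))
    (a b : ℚ) (x y : F) :
    emb n F σ (a • x + b • y) = (a : ℝ) • emb n F σ x + (b : ℝ) • emb n F σ y := by
  ext i
  simp [emb, Rat.smul_def]

/-- Coordinates with respect to independent generators are unique, so incompatible conditions on
them cut out disjoint parts of the cone. -/
theorem posSpan_disjoint {E ι : Type*} [AddCommGroup E] [Module ℝ E] [Fintype ι]
    {v : ι → E} (hv : LinearIndependent ℝ v) {p q : (ι → ℝ) → Prop} (hpq : ∀ c, p c → ¬ q c) :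
    Disjoint {y | ∃ c : ι → ℝ, (∀ t, 0 < c t) ∧ p c ∧ y = ∑ t, c t • v t}
      {y | ∃ c : ι → ℝ, (∀ t, 0 < c t) ∧ q c ∧ y = ∑ t, c t • v t} := by
  rw [Set.disjoint_left]
  rintro y ⟨c, -, hc, rfl⟩ ⟨c', -, hc', he⟩
  have : c = c' := by
    have h := Fintype.linearIndependent_iff.1 hv (fun t => c t - c' t)
      (by simp only [sub_smul, Finset.sum_sub_distrib, he, sub_self])
    exact funext fun t => sub_eq_zero.1 (h t)
  exact hpq c hc (this ▸ hc')

/-- A linear functional `ℓ` that is rational on the image of `F` cuts a Shintani cone into parts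
(positive, zero, negative) each of which is a Shintani set. The induction is on the number `N` of
generators off the hyperplane `ℓ = 0`. If `ℓ` takes both signs on the generators, the edge joining
a positive and a negative one meets the hyperplane in a ray through an element of `F`; subdividing
at this ray gives three cones with fewer generators off the hyperplane. Otherwise the sign of `ℓ`
is constant on the open cone. -/
theorem isShintaniSet_posSpan_inter {n : ℕ} {F : Type} [Field F] [NumberField F]
    {σ : Fin n → (F →+* ℝ)} (ℓ : (Fin n → ℝ) →ₗ[ℝ] ℝ) (q : F → ℚ)
    (hq : ∀ x, ℓ (emb n F σ x) = q x) (s : SignType) (N : ℕ) :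
    ∀ (ι : Type) [Fintype ι] [Nonempty ι] (x : ι → F), (∀ t i, 0 < σ i (x t)) →
      LinearIndependent ℝ (fun t => emb n F σ (x t)) →
      (Finset.univ.filter fun t => q (x t) ≠ 0).card = N →
      IsShintaniSet n F σ ((posSpan fun t => emb n F σ (x t)) ∩ {y | SignType.sign (ℓ y) = s}) := by
  classical
  induction N using Nat.strong_induction_on with
  | _ N ih =>
  intro ι _ _ x hx hli hN
  by_cases hmix : ∃ i j, 0 < q (x i) ∧ q (x j) < 0
  · obtain ⟨i, j, hi, hj⟩ := hmix
    have hij : i ≠ j := by rintro rfl; exact lt_asymm hi hj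
    set a := q (x i) with ha
    set b := - q (x j) with hb
    have hb0 : 0 < b := by linarith
    have haR : (0 : ℝ) < a := by exact_mod_cast hi
    have hbR : (0 : ℝ) < b := by exact_mod_cast hb0
    -- the new ray lies on the wall
    have hw0 : q (a • x j + b • x i) = 0 := by
      have h := hq (a • x j + b • x i)
      rw [emb_comb, map_add, map_smul, map_smul, hq, hq, ← ha,
        show q (x j) = -b by rw [hb]; ring] at h
      have h' : ((q (a • x j + b • x i) : ℚ) : ℝ) = 0 := by
        rw [← h]; push_cast; simp only [smul_eq_mul]; ring
      exact_mod_cast h'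
    have hwpos : ∀ m, 0 < σ m (a • x j + b • x i) := by
      intro m
      have := hx i m
      have := hx j m
      simp only [Rat.smul_def, map_add, map_mul, map_ratCast]
      positivity
    set w := a • x j + b • x i with hw
    -- each piece of the subdivision has `w` in the place of `x m`, and some of the other generators
    have step : ∀ (κ : Type) [Fintype κ] [Nonempty κ] (x' : κ → F) (f : κ → ι) (m : ι),
        Function.Injective f → q (x m) ≠ 0 →
        (∀ k, (f k = m ∧ x' k = w) ∨ (f k ≠ m ∧ x' k = x (f k))) →
        LinearIndependent ℝ (fun k => emb n F σ (x' k)) →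
        IsShintaniSet n F σ
          ((posSpan fun k => emb n F σ (x' k)) ∩ {y | SignType.sign (ℓ y) = s}) := by
      intro κ _ _ x' f m hf hm hx' hli'
      refine ih _ ?_ κ x' (fun k l => ?_) hli' rfl
      · rw [← hN, ← Finset.card_image_of_injective _ hf]
        refine Finset.card_lt_card (Finset.ssubset_iff_of_subset ?_ |>.2 ⟨m, by simpa using hm, ?_⟩)
        · intro t ht
          simp only [Finset.mem_image, Finset.mem_filter, Finset.mem_univ, true_and] at ht ⊢
          obtain ⟨k, hk, rfl⟩ := ht
          rcases hx' k with ⟨-, h⟩ | ⟨-, h⟩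
          · exact (hk (h ▸ hw0)).elim
          · rwa [← h]
        · simp only [Finset.mem_image, Finset.mem_filter, Finset.mem_univ, true_and]
          rintro ⟨k, hk, hkm⟩
          rcases hx' k with ⟨-, h⟩ | ⟨h, -⟩
          · exact hk (h ▸ hw0)
          · exact h hkm
      · rcases hx' k with ⟨-, h⟩ | ⟨-, h⟩ <;> rw [h]
        exacts [hwpos l, hx _ l]
    set v := fun t => emb n F σ (x t) with hv
    have hwv : emb n F σ w = (a : ℝ) • v j + (b : ℝ) • v i := emb_comb σ a b _ _
    have hup : ∀ m, (fun t => emb n F σ (Function.update x m w t)) =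
        Function.update v m ((a : ℝ) • v j + (b : ℝ) • v i) := by
      intro m
      ext1 t
      by_cases ht : t = m
      · subst ht; simp [hwv]
      · simp [Function.update_of_ne ht, hv]
    have hor : ∀ m t, (t = m ∧ Function.update x m w t = w) ∨
        (t ≠ m ∧ Function.update x m w t = x t) := by
      intro m t
      by_cases ht : t = m
      · subst ht; simp
      · simp [ht]
    have hli₁ := linearIndependent_update hli hij (a : ℝ) hbR.ne'
    have hli₂ := linearIndependent_update hli hij.symm (b : ℝ) haR.ne'
    have h₁ := step ι (Function.update x i w) id i Function.injective_id hi.ne' (hor i)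
      (by rw [hup]; exact hli₁)
    have h₂ := step ι (Function.update x j w) id j Function.injective_id hj.ne (hor j)
      (by rw [hup, add_comm]; exact hli₂)
    have : Nonempty {t // t ≠ j} := ⟨⟨i, hij⟩⟩
    have h₃ := step {t // t ≠ j} (fun t => Function.update x i w t) Subtype.val i
      Subtype.val_injective hi.ne' (fun t => hor i t)
      (by
        have := hli₁.comp (Subtype.val : {t // t ≠ j} → ι) Subtype.val_injective
        rw [← hup] at this
        exact this)
    rw [hup, posSpan_update v hij haR hbR] at h₁
    rw [hup, add_comm, posSpan_update v hij.symm hbR haR] at h₂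
    have hup₃ : (fun t : {t // t ≠ j} => emb n F σ (Function.update x i w t)) =
        fun t : {t // t ≠ j} => Function.update v i ((a : ℝ) • v j + (b : ℝ) • v i) t := by
      ext1 t
      exact congrFun (hup i) t
    rw [hup₃, posSpan_update_restrict v hij haR hbR] at h₃
    have hsplit : posSpan v =
        ({y | ∃ c : ι → ℝ, (∀ t, 0 < c t) ∧ a * c i < b * c j ∧ y = ∑ t, c t • v t} ∪
        {y | ∃ c : ι → ℝ, (∀ t, 0 < c t) ∧ b * c j < a * c i ∧ y = ∑ t, c t • v t}) ∪
        {y | ∃ c : ι → ℝ, (∀ t, 0 < c t) ∧ a * c i = b * c j ∧ y = ∑ t, c t • v t} := by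
      ext y
      constructor
      · rintro ⟨c, hc, rfl⟩
        rcases lt_trichotomy (a * c i) (b * c j) with h | h | h
        · exact Or.inl (Or.inl ⟨c, hc, h, rfl⟩)
        · exact Or.inr ⟨c, hc, h, rfl⟩
        · exact Or.inl (Or.inr ⟨c, hc, h, rfl⟩)
      · rintro ((⟨c, hc, -, rfl⟩ | ⟨c, hc, -, rfl⟩) | ⟨c, hc, -, rfl⟩) <;> exact ⟨c, hc, rfl⟩
    rw [hsplit, Set.union_inter_distrib_right, Set.union_inter_distrib_right]
    refine isShintaniSet_union (isShintaniSet_union h₁ h₂ ?_) h₃ ?_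
    · exact (posSpan_disjoint hli fun c h => h.le.not_gt).mono Set.inter_subset_left
        Set.inter_subset_left
    · rw [Set.disjoint_union_left]
      constructor
      · exact (posSpan_disjoint hli fun c h => h.ne).mono Set.inter_subset_left
          Set.inter_subset_left
      · exact (posSpan_disjoint hli fun c h => h.ne').mono Set.inter_subset_left
          Set.inter_subset_left
  · have hconst : ∃ s₀, ∀ y ∈ posSpan (fun t => emb n F σ (x t)), SignType.sign (ℓ y) = s₀ := by
      have hval : ∀ c : ι → ℝ, ℓ (∑ t, c t • emb n F σ (x t)) = ∑ t, c t * q (x t) := by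
        intro c; simp [map_sum, hq]
      by_cases hp : ∃ i, 0 < q (x i)
      · obtain ⟨i, hi⟩ := hp
        refine ⟨1, ?_⟩
        rintro _ ⟨c, hc, rfl⟩
        rw [hval, sign_eq_one_iff]
        refine Finset.sum_pos' (fun t _ => mul_nonneg (hc t).le ?_)
          ⟨i, Finset.mem_univ _, mul_pos (hc i) (by exact_mod_cast hi)⟩
        exact_mod_cast not_lt.1 fun ht => hmix ⟨i, t, hi, ht⟩
      by_cases hn : ∃ i, q (x i) < 0
      · obtain ⟨i, hi⟩ := hn
        refine ⟨-1, ?_⟩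
        rintro _ ⟨c, hc, rfl⟩
        rw [hval, sign_eq_neg_one_iff]
        refine Finset.sum_neg' (fun t _ => mul_nonpos_of_nonneg_of_nonpos (hc t).le ?_)
          ⟨i, Finset.mem_univ _, mul_neg_of_pos_of_neg (hc i) (by exact_mod_cast hi)⟩
        exact_mod_cast not_lt.1 fun ht => hp ⟨t, ht⟩
      · refine ⟨0, ?_⟩
        rintro _ ⟨c, hc, rfl⟩
        rw [hval, sign_eq_zero_iff]
        refine Finset.sum_eq_zero fun t _ => ?_
        have : q (x t) = 0 := le_antisymm (not_lt.1 fun h => hp ⟨t, h⟩) (not_lt.1 fun h => hn ⟨t, h⟩)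
        simp [this]
    obtain ⟨s₀, hs₀⟩ := hconst
    by_cases hs : s₀ = s
    · rw [Set.inter_eq_left.2 (show _ ⊆ {y | SignType.sign (ℓ y) = s} from
        fun y hy => (hs₀ y hy).trans hs)]
      exact (isShintaniCone_posSpan x hx hli).isShintaniSet
    · convert isShintaniSet_empty
      rw [Set.eq_empty_iff_forall_notMem]
      rintro y ⟨hy, hy'⟩
      exact hs ((hs₀ y hy).symm.trans hy')

/-! ### Intersections of Shintani sets -/

/-- A `ℚ`-basis of `F` spans `ℝ^n` over `ℝ`: a functional vanishing on it would be a linear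
relation between the embeddings `σ i`, which are independent by Dedekind's theorem. -/
theorem span_emb_basis {n : ℕ} {F : Type} [Field F] [NumberField F] {σ : Fin n → (F →+* ℝ)}
    (hinj : Function.Injective σ) {κ : Type*} (b : Module.Basis κ ℚ F) :
    ⊤ ≤ Submodule.span ℝ (Set.range fun k => emb n F σ (b k)) := by
  by_contra hne
  obtain ⟨f, hf0, hf⟩ := Submodule.exists_le_ker_of_lt_top _ (lt_top_iff_ne_top.2 (top_le_iff.not.1 hne))
  have hz : (f.restrictScalars ℚ).comp (embₗ n F σ) = 0 :=
    b.ext fun k => hf (Submodule.subset_span ⟨k, rfl⟩)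
  have hli : LinearIndependent ℝ (fun i => ((σ i : F →* ℝ) : F → ℝ)) :=
    (linearIndependent_monoidHom F ℝ).comp (fun i => (σ i : F →* ℝ)) fun i j h =>
      hinj (RingHom.ext fun x => DFunLike.congr_fun h x)
  have hc := Fintype.linearIndependent_iff.1 hli (fun i => f (Pi.single i 1)) (by
    ext x
    have h : f (emb n F σ x) = 0 := LinearMap.congr_fun hz x
    rw [LinearMap.pi_apply_eq_sum_univ] at h
    have hs : ∀ i : Fin n, (fun j => if i = j then (1 : ℝ) else 0) = Pi.single i 1 := fun i => by
      ext j; simp [Pi.single_apply, eq_comm]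
    simpa [emb, mul_comm, hs] using h)
  exact hf0 (LinearMap.pi_ext' fun i => LinearMap.ext_ring (by simpa using hc i))

/-- A Shintani cone is given by sign conditions on finitely many functionals that are rational on
`F`: extend its generators to a `ℚ`-basis of `F` and take the coordinate functions, positive at
the generators and zero at the added basis vectors. -/
theorem IsShintaniCone.exists_signs {n : ℕ} {F : Type} [Field F] [NumberField F]
    (hdeg : Module.finrank ℚ F = n) {σ : Fin n → (F →+* ℝ)} (hinj : Function.Injective σ)
    {C : Set (Fin n → ℝ)} (hC : IsShintaniCone n F σ C) :
    ∃ (κ : Type) (_ : Finite κ) (ℓ : κ → (Fin n → ℝ) →ₗ[ℝ] ℝ) (q : κ → F → ℚ) (s : κ → SignType),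
      (∀ k x, ℓ k (emb n F σ x) = q k x) ∧ C = {y | ∀ k, SignType.sign (ℓ k y) = s k} := by
  classical
  obtain ⟨r, x, -, -, hli, rfl⟩ := hC.exists_posSpan
  have hliQ : LinearIndependent ℚ x := by
    have h : LinearIndependent ℚ (fun t => emb n F σ (x t)) := hli.restrict_scalars' ℚ
    exact LinearIndependent.of_comp (embₗ n F σ) h
  have hs : LinearIndepOn ℚ id (Set.range x) := hliQ.linearIndepOn_id
  let b := Module.Basis.extend hs
  have : Finite (hs.extend (Set.subset_univ (Set.range x))) := Module.Finite.finite_basis b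
  let := Fintype.ofFinite (hs.extend (Set.subset_univ (Set.range x)))
  let B := basisOfTopLeSpanOfCardEqFinrank _ (span_emb_basis hinj b)
    (by rw [← Module.finrank_eq_card_basis b, hdeg, Module.finrank_fin_fun])
  have hB : ∀ k, B k = emb n F σ (b k) := fun k => by
    simp [B]
  let e : Fin r → hs.extend (Set.subset_univ (Set.range x)) :=
    fun t => ⟨x t, hs.subset_extend _ ⟨t, rfl⟩⟩
  have he : Function.Injective e := fun t t' h => hliQ.injective (congrArg Subtype.val h)
  have hBe : ∀ t, B (e t) = emb n F σ (x t) := fun t => by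
    rw [hB, Module.Basis.extend_apply_self]
  refine ⟨_, inferInstance, B.coord, fun k y => b.repr y k, fun k => if k ∈ Set.range e then 1 else 0,
    ?_, ?_⟩
  · intro k y
    have h : emb n F σ y = ∑ m, ((b.repr y m : ℚ) : ℝ) • B m := by
      conv_lhs => rw [← b.sum_repr y]
      change embₗ n F σ _ = _
      rw [map_sum]
      refine Finset.sum_congr rfl fun m _ => ?_
      rw [map_smul, hB]
      ext i
      simp [embₗ, Rat.smul_def]
    rw [h, map_sum]
    simp [Finsupp.single_apply]
  · ext y
    constructor
    · rintro ⟨c, hc, rfl⟩ k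
      simp only [← hBe, map_sum, map_smul, Module.Basis.coord_apply, Module.Basis.repr_self,
        Finsupp.single_apply, smul_eq_mul, mul_ite, mul_one, mul_zero]
      by_cases hk : k ∈ Set.range e
      · obtain ⟨t, rfl⟩ := hk
        simp [he.eq_iff, hc]
      · rw [if_neg hk, Finset.sum_eq_zero, sign_zero]
        intro t _
        exact if_neg fun h => hk ⟨t, h⟩
    · intro hy
      refine ⟨fun t => B.coord (e t) y, fun t => ?_, ?_⟩
      · have := hy (e t)
        simpa only [Set.mem_range_self, if_true, sign_eq_one_iff] using this
      · conv_lhs => rw [← B.sum_repr y]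
        symm
        refine Fintype.sum_of_injective e he _ _ ?_ ?_
        · intro k hk
          have := hy k
          simp only [hk, if_false, sign_eq_zero_iff] at this
          rw [← Module.Basis.coord_apply, this, zero_smul]
        · intro t
          rw [hBe]; rfl

theorem IsShintaniSet.inter_sign {n : ℕ} {F : Type} [Field F] [NumberField F]
    {σ : Fin n → (F →+* ℝ)} {S : Set (Fin n → ℝ)} (hS : IsShintaniSet n F σ S)
    (ℓ : (Fin n → ℝ) →ₗ[ℝ] ℝ) (q : F → ℚ) (hq : ∀ x, ℓ (emb n F σ x) = q x) (s : SignType) :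
    IsShintaniSet n F σ (S ∩ {y | SignType.sign (ℓ y) = s}) := by
  obtain ⟨d, C, hC, hd, rfl⟩ := hS
  rw [Set.iUnion_inter]
  refine isShintaniSet_iUnion (fun k => ?_) fun k k' h =>
    (hd k k' h).mono Set.inter_subset_left Set.inter_subset_left
  obtain ⟨r, x, hr, hx, hli, h⟩ := (hC k).exists_posSpan
  have : Nonempty (Fin r) := ⟨⟨0, hr⟩⟩
  rw [h]
  exact isShintaniSet_posSpan_inter ℓ q hq s _ _ x hx hli rfl

theorem IsShintaniSet.inter {n : ℕ} {F : Type} [Field F] [NumberField F]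
    (hdeg : Module.finrank ℚ F = n) {σ : Fin n → (F →+* ℝ)} (hinj : Function.Injective σ)
    {S T : Set (Fin n → ℝ)} (hS : IsShintaniSet n F σ S) (hT : IsShintaniSet n F σ T) :
    IsShintaniSet n F σ (S ∩ T) := by
  classical
  obtain ⟨d, C, hC, hd, rfl⟩ := hT
  rw [Set.inter_iUnion]
  refine isShintaniSet_iUnion (fun k => ?_) fun k k' h =>
    (hd k k' h).mono Set.inter_subset_right Set.inter_subset_right
  obtain ⟨κ, _, ℓ, q, s, hq, h⟩ := (hC k).exists_signs hdeg hinj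
  let := Fintype.ofFinite κ
  have key : ∀ A : Finset κ,
      IsShintaniSet n F σ (S ∩ {y | ∀ k ∈ A, SignType.sign (ℓ k y) = s k}) := by
    intro A
    induction A using Finset.induction_on with
    | empty => simpa using hS
    | insert m A _ ih =>
      convert ih.inter_sign (ℓ m) (q m) (hq m) (s m) using 1
      ext y
      simp only [Finset.forall_mem_insert, Set.mem_inter_iff, Set.mem_ofPred_eq]
      tauto
  simpa [h] using key Finset.univ

/-! ### The action of units -/

theorem isShintaniSet_scaleSet {n : ℕ} {F : Type} [Field F] {σ : Fin n → (F →+* ℝ)}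
    {S : Set (Fin n → ℝ)} (hS : IsShintaniSet n F σ S) {x : F} (hx : ∀ i, 0 < σ i x) :
    IsShintaniSet n F σ (scaleSet n F σ x S) := by
  have hinj : Function.Injective (fun (y : Fin n → ℝ) i => σ i x * y i) := fun y z h =>
    funext fun i => mul_left_cancel₀ (hx i).ne' (congrFun h i)
  obtain ⟨d, C, hC, hd, rfl⟩ := hS
  rw [scaleSet, Set.image_iUnion]
  refine isShintaniSet_of_finite (fun k => ?_) fun k k' h =>
    (Set.disjoint_image_iff hinj).2 (hd k k' h)
  obtain ⟨r, z, hr, hz, hli, h⟩ := (hC k).exists_posSpan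
  have : Nonempty (Fin r) := ⟨⟨0, hr⟩⟩
  let L : (Fin n → ℝ) →ₗ[ℝ] (Fin n → ℝ) := LinearMap.mulLeft ℝ (fun i => σ i x)
  have hL : ∀ w, L (emb n F σ w) = emb n F σ (x * w) := fun w => by
    ext i; simp [L, emb]
  have hli' : LinearIndependent ℝ fun t => emb n F σ (x * z t) := by
    simp only [← hL]
    exact hli.map' L (LinearMap.ker_eq_bot.2 hinj)
  convert isShintaniCone_posSpan (fun t => x * z t)
    (fun t i => by rw [map_mul]; exact mul_pos (hx i) (hz t i)) hli' using 1
  rw [h]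
  change L '' _ = _
  ext y
  simp only [← hL]
  constructor
  · rintro ⟨_, ⟨c, hc, rfl⟩, rfl⟩
    exact ⟨c, hc, by simp⟩
  · rintro ⟨c, hc, rfl⟩
    exact ⟨_, ⟨c, hc, rfl⟩, by simp⟩

/-- On a Shintani set the ratio of any two coordinates is bounded. -/
theorem IsShintaniSet.exists_ratio_le {n : ℕ} {F : Type} [Field F] {σ : Fin n → (F →+* ℝ)}
    {S : Set (Fin n → ℝ)} (hS : IsShintaniSet n F σ S) :
    ∃ M : ℝ, ∀ y ∈ S, ∀ i j, y i ≤ M * y j := by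
  obtain ⟨d, C, hC, -, rfl⟩ := hS
  choose r x _ hx _ hCx using fun k => (hC k).exists_posSpan
  obtain ⟨M, hM⟩ := Finite.exists_le
    (fun p : (Σ k, Fin (r k)) × Fin n × Fin n =>
      σ p.2.1 (x p.1.1 p.1.2) / σ p.2.2 (x p.1.1 p.1.2))
  refine ⟨M, fun y hy i j => ?_⟩
  obtain ⟨k, hk⟩ := Set.mem_iUnion.1 hy
  rw [hCx k] at hk
  obtain ⟨c, hc, rfl⟩ := hk
  simp only [Finset.sum_apply, Pi.smul_apply, smul_eq_mul, Finset.mul_sum]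
  refine Finset.sum_le_sum fun t _ => ?_
  have h := hM (⟨k, t⟩, i, j)
  rw [div_le_iff₀ (hx k t j)] at h
  calc c t * σ i (x k t) ≤ c t * (M * σ j (x k t)) := mul_le_mul_of_nonneg_left h (hc t).le
    _ = M * (c t * σ j (x k t)) := by ring

/-- As `F` has only `n` complex embeddings, all of them are given by the `n` distinct real
embeddings `σ i`. -/
theorem bijective_complex {n : ℕ} {F : Type} [Field F] [NumberField F]
    (hdeg : Module.finrank ℚ F = n) {σ : Fin n → (F →+* ℝ)} (hinj : Function.Injective σ) :
    Function.Bijective fun i => Complex.ofRealHom.comp (σ i) := by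
  rw [Fintype.bijective_iff_injective_and_card]
  refine ⟨fun i j h => hinj (RingHom.ext fun x => ?_), ?_⟩
  · exact Complex.ofReal_injective (RingHom.congr_fun h x)
  · rw [NumberField.Embeddings.card, hdeg, Fintype.card_fin]

theorem prod_uval {n : ℕ} {F : Type} [Field F] [NumberField F]
    (hdeg : Module.finrank ℚ F = n) {σ : Fin n → (F →+* ℝ)} (hinj : Function.Injective σ)
    (u : (NumberField.RingOfIntegers F)ˣ) : |∏ i, σ i (uval F u)| = 1 := by
  have hbij := bijective_complex hdeg hinj
  have h1 := Algebra.norm_eq_prod_embeddings ℚ ℂ (uval F u)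
  rw [Fintype.prod_equiv (RingHom.equivRatAlgHom F ℂ).symm (fun f => f (uval F u))
    (fun φ => φ (uval F u)) fun _ => by simp [RingHom.equivRatAlgHom_symm_apply],
    ← hbij.prod_comp (fun φ : F →+* ℂ => φ (uval F u))] at h1
  have h2 : |Algebra.norm ℚ (uval F u)| = 1 := NumberField.Units.norm F u
  have h3 : ((Algebra.norm ℚ (uval F u) : ℚ) : ℝ) = ∏ i, σ i (uval F u) := by
    apply Complex.ofReal_injective
    simpa using h1
  rw [← h3]
  exact_mod_cast h2

/-- Totally positive units whose conjugates have bounded ratios are finite in number: some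
conjugate is at most `1` because their product is `1`, so all conjugates are bounded. -/
theorem finite_units {n : ℕ} {F : Type} [Field F] [NumberField F]
    (hdeg : Module.finrank ℚ F = n) {σ : Fin n → (F →+* ℝ)} (hinj : Function.Injective σ) (M : ℝ) :
    {u : (NumberField.RingOfIntegers F)ˣ | (∀ i, 0 < σ i (uval F u)) ∧
      ∀ i j, σ i (uval F u) ≤ M * σ j (uval F u)}.Finite := by
  have hfin := NumberField.Embeddings.finite_of_norm_le F ℂ M
  refine (hfin.preimage (f := uval F) (Set.injOn_of_injective fun u u' h => ?_)).subset ?_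
  · exact Units.ext (NumberField.RingOfIntegers.coe_injective h)
  rintro u ⟨hpos, hle⟩
  refine ⟨NumberField.RingOfIntegers.isIntegral_coe _, fun φ => ?_⟩
  obtain ⟨i, rfl⟩ := (bijective_complex hdeg hinj).2 φ
  obtain ⟨j, hj⟩ : ∃ j, σ j (uval F u) ≤ 1 := by
    by_contra! h
    have := prod_uval hdeg hinj u
    rw [abs_of_pos (Finset.prod_pos fun i _ => hpos i)] at this
    have hlt := Finset.prod_lt_prod_of_nonempty (fun _ _ => one_pos) (fun j _ => h j)
      ⟨i, Finset.mem_univ i⟩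
    rw [Finset.prod_const_one, this] at hlt
    exact lt_irrefl _ hlt
  have hM : 0 < M := pos_of_mul_pos_left ((hpos i).trans_le (hle i i)) (hpos i).le
  simp only [RingHom.comp_apply, Complex.ofRealHom_eq_coe, Complex.norm_real, Real.norm_eq_abs, abs_of_pos (hpos i)]
  nlinarith [hle i j]

/-- two Colmez domains `D`, `D′` for a finite-index subgroup
`V ≤ E₊(𝔣)` admit a simultaneous decomposition: there are Shintani cones `C₁,…,C_d`
and units `ε₁,…,ε_d ∈ V` such that `D = ⨆ᵢ Cᵢ` and `D′ = ⨆ᵢ εᵢCᵢ` (disjoint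
unions). -/
theorem statement6
    (n : ℕ)
    (F : Type) [Field F] [NumberField F]
    (hdeg : Module.finrank ℚ F = n)
    (σ : Fin n → (F →+* ℝ))
    (hinj : Function.Injective σ)
    (hsurj : ∀ φ : F →+* ℝ, ∃ i, σ i = φ)
    (𝔣 : Ideal (NumberField.RingOfIntegers F)) (h𝔣 : 𝔣 ≠ ⊥)
    (V : Subgroup (totPosUnitsMod n F σ 𝔣)) (hV : V.FiniteIndex)
    (D D' : Set (Fin n → ℝ))
    (hD : IsShintaniSet n F σ D) (hD' : IsShintaniSet n F σ D')
    (hDfd : IsColmezFD n F σ 𝔣 V D) (hD'fd : IsColmezFD n F σ 𝔣 V D') :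
    ∃ (d : ℕ) (C : Fin d → Set (Fin n → ℝ)) (e : Fin d → V),
      1 ≤ d ∧
      (∀ k, IsShintaniCone n F σ (C k)) ∧
      (∀ k k', k ≠ k' → Disjoint (C k) (C k')) ∧
      D = ⋃ k, C k ∧
      (∀ k k', k ≠ k' →
        Disjoint (scaleSet n F σ (uval F ↑↑(e k)) (C k))
          (scaleSet n F σ (uval F ↑↑(e k')) (C k'))) ∧
      D' = ⋃ k, scaleSet n F σ (uval F ↑↑(e k)) (C k) := by
  have hpos : ∀ (e : V) i, 0 < σ i (uval F ↑↑e) := fun e => (e : totPosUnitsMod n F σ 𝔣).2.1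
  have hscale : ∀ e : V, Function.Injective fun (y : Fin n → ℝ) i => σ i (uval F ↑↑e) * y i :=
    fun e y z h => funext fun i => mul_left_cancel₀ (hpos e i).ne' (congrFun h i)
  have hmul : ∀ (e e' : V) (y : Fin n → ℝ),
      (fun i => σ i (uval F ↑↑e) * (σ i (uval F ↑↑e') * y i)) =
        fun i => σ i (uval F ↑↑(e * e')) * y i := by
    intro e e' y
    ext i
    simp [uval, mul_assoc]
  have hone : ∀ y : Fin n → ℝ, (fun i => σ i (uval F ↑↑(1 : V)) * y i) = y := by
    intro y
    ext i
    simp [uval]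
  have horth : ∀ {A : Set (Fin n → ℝ)}, IsColmezFD n F σ 𝔣 V A → ∀ y ∈ A, ∀ i, 0 < y i := by
    intro A hA y hy
    have : y ∈ ⋃ e : V, scaleSet n F σ (uval F ↑↑e) A :=
      Set.mem_iUnion.2 ⟨1, y, hy, hone y⟩
    rw [hA.1] at this
    exact this
  have hex : ∀ {A : Set (Fin n → ℝ)}, IsColmezFD n F σ 𝔣 V A → ∀ y : Fin n → ℝ, (∀ i, 0 < y i) →
      ∃ e : V, ∃ z ∈ A, (fun i => σ i (uval F ↑↑e) * z i) = y := by
    intro A hA y hy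
    have : y ∈ ⋃ e : V, scaleSet n F σ (uval F ↑↑e) A := by
      rw [hA.1]; exact hy
    exact Set.mem_iUnion.1 this
  have huniq : ∀ {A : Set (Fin n → ℝ)}, IsColmezFD n F σ 𝔣 V A → ∀ {e e' : V} {y z : Fin n → ℝ},
      y ∈ A → z ∈ A →
      (fun i => σ i (uval F ↑↑e) * y i) = (fun i => σ i (uval F ↑↑e') * z i) → e = e' := by
    intro A hA e e' y z hy hz h
    by_contra hne
    exact Set.disjoint_left.1 (hA.2 e e' hne) ⟨y, hy, rfl⟩ ⟨z, hz, h.symm⟩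
  -- `P e` is the part of `D` that `e` carries into `D'`; the sets `P e` partition `D`, and the
  -- sets `e P e` partition `D'`.
  let P : V → Set (Fin n → ℝ) := fun e => D ∩ scaleSet n F σ (uval F ↑↑e⁻¹) D'
  have hP : ∀ e y, y ∈ P e ↔ y ∈ D ∧ (fun i => σ i (uval F ↑↑e) * y i) ∈ D' := by
    intro e y
    refine and_congr_right fun _ => ⟨?_, fun h => ⟨_, h, ?_⟩⟩
    · rintro ⟨z, hz, rfl⟩
      rw [hmul, mul_inv_cancel, hone]
      exact hz
    · exact (hmul e⁻¹ e y).trans (by rw [inv_mul_cancel, hone])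
  have hPS : ∀ e, IsShintaniSet n F σ (P e) := fun e =>
    hD.inter hdeg hinj (isShintaniSet_scaleSet hD' (hpos e⁻¹))
  have hPfin : {e : V | (P e).Nonempty}.Finite := by
    obtain ⟨M, hM⟩ := hD.exists_ratio_le
    obtain ⟨M', hM'⟩ := hD'.exists_ratio_le
    refine ((finite_units hdeg hinj (M' * M)).preimage
      (f := fun e : V => ((e : totPosUnitsMod n F σ 𝔣) : (NumberField.RingOfIntegers F)ˣ))
      (Set.injOn_of_injective (Subtype.val_injective.comp Subtype.val_injective))).subset ?_
    rintro e ⟨y, hy⟩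
    obtain ⟨hyD, hyD'⟩ := (hP e y).1 hy
    refine ⟨hpos e, fun i j => ?_⟩
    have hyi := horth hDfd y hyD i
    have hyj := horth hDfd y hyD j
    have h1 := hM y hyD j i
    have h2 := hM' _ hyD' i j
    -- comparing coordinates inside `D` and inside `D'` bounds the ratio of two conjugates of `e`
    have hM'0 : 0 ≤ M' := by
      have h3 := hM' _ hyD' i i
      have h4 : 0 < σ i (uval F ↑↑e) * y i := mul_pos (hpos e i) hyi
      exact (pos_of_mul_pos_left (h4.trans_le h3) h4.le).le
    refine le_of_mul_le_mul_right ?_ hyi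
    calc σ i (uval F ↑↑e) * y i ≤ M' * (σ j (uval F ↑↑e) * y j) := h2
      _ ≤ M' * (σ j (uval F ↑↑e) * (M * y i)) := by
        have := hpos e j
        gcongr
      _ = M' * M * σ j (uval F ↑↑e) * y i := by ring
  choose m C hC hCd hCU using hPS
  have hCP : ∀ e k, C e k ⊆ P e := fun e k => by
    rw [hCU e]; exact Set.subset_iUnion (C e) k
  have : Finite {e : V | (P e).Nonempty} := hPfin
  obtain ⟨d, ⟨f⟩⟩ := Finite.exists_equiv_fin (Σ e : {e : V | (P e).Nonempty}, Fin (m e))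
  have hcover : ∀ e y, y ∈ P e → ∃ k, y ∈ C (f.symm k).1 (f.symm k).2 ∧ (f.symm k).1 = e := by
    intro e y hy
    obtain ⟨k, hk⟩ := Set.mem_iUnion.1 ((hCU e) ▸ hy)
    refine ⟨f ⟨⟨e, ⟨y, hy⟩⟩, k⟩, ?_⟩
    rw [f.symm_apply_apply]
    exact ⟨hk, rfl⟩
  have hDP : ∀ y ∈ D, ∃ e, y ∈ P e := by
    intro y hy
    obtain ⟨e, z, hz, h⟩ := hex hD'fd y (horth hDfd y hy)
    refine ⟨e⁻¹, hy, z, hz, ?_⟩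
    simp only [inv_inv]
    exact h
  have hdisj : ∀ p p' : Σ e : {e : V | (P e).Nonempty}, Fin (m e), p ≠ p' → p.1 = p'.1 →
      Disjoint (C p.1 p.2) (C p'.1 p'.2) := by
    rintro ⟨e, a⟩ ⟨e', a'⟩ hne (rfl : e = e')
    exact hCd e a a' fun h => hne (by rw [h])
  refine ⟨d, fun k => C (f.symm k).1 (f.symm k).2, fun k => (f.symm k).1, ?_, fun k => hC _ _,
    ?_, ?_, ?_, ?_⟩
  · obtain ⟨-, z, hz, -⟩ := hex hDfd (fun _ => 1) fun _ => one_pos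
    obtain ⟨e, he⟩ := hDP z hz
    obtain ⟨k, -⟩ := hcover e z he
    exact Fin.pos k
  · intro k k' hkk
    by_cases he : (f.symm k).1 = (f.symm k').1
    · exact hdisj _ _ (f.symm.injective.ne hkk) he
    · rw [Set.disjoint_left]
      intro y hy hy'
      have h := ((hP _ _).1 (hCP _ _ hy)).2
      have h' := ((hP _ _).1 (hCP _ _ hy')).2
      -- the same point of `D` would be carried into `D'` by two different units
      refine he (Subtype.ext (inv_injective (huniq hD'fd h h' ?_)))
      rw [hmul, hmul, inv_mul_cancel, inv_mul_cancel]
  · ext y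
    constructor
    · intro hy
      obtain ⟨e, he⟩ := hDP y hy
      obtain ⟨k, hk, -⟩ := hcover e y he
      exact Set.mem_iUnion.2 ⟨k, hk⟩
    · intro hy
      obtain ⟨k, hk⟩ := Set.mem_iUnion.1 hy
      exact (hCP _ _ hk).1
  · intro k k' hkk
    by_cases he : (f.symm k).1 = (f.symm k').1
    · have h := hdisj _ _ (f.symm.injective.ne hkk) he
      rw [Set.disjoint_left]
      rintro _ ⟨y, hy, rfl⟩ ⟨z, hz, hzy⟩
      simp only [← he] at hzy
      exact Set.disjoint_left.1 h hy (hscale _ hzy ▸ hz)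
    · refine (hDfd.2 _ _ fun h => he (Subtype.ext h)).mono ?_ ?_ <;>
        exact Set.image_mono ((hCP _ _).trans Set.inter_subset_left)
  · ext y
    constructor
    · intro hy
      obtain ⟨e, z, hz, rfl⟩ := hex hDfd y (horth hD'fd y hy)
      obtain ⟨k, hk, he⟩ := hcover e z ((hP e z).2 ⟨hz, hy⟩)
      refine Set.mem_iUnion.2 ⟨k, z, hk, ?_⟩
      simp only [he]
    · intro hy
      obtain ⟨k, z, hz, rfl⟩ := Set.mem_iUnion.1 hy
      exact ((hP _ _).1 (hCP _ _ hz)).2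

end
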